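/- arXiv:1407.4315 — 4 statements merged into one kernel-verified Lean document; each statement's English description precedes it below -/
import Mathlib

section
/- Let S = Σ_{k≥1} 1/k². For every integer r ≥ 1 and every integer n ≥ 1 one has n² · Σ 1/(k₁² k₂² ⋯ k_r²) ≤ (4S)^{r−1}, where the sum runs over all r-tuples (k₁,…,k_r) of positive integers with k₁ + ⋯ + k_r = n. -/
open scoped BigOperators

/-!
Convexity of `x ↦ x ^ p` gives `(a + b) ^ p ≤ 2 ^ (p - 1) * (a ^ p + b ^ p)`, so the weight
`f k = 1 / k ^ p` satisfies `f a * f b ≤ 2 ^ (p - 1) * (f a + f b) * f (a + b)`. Summing over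
`a + b = n` bounds the convolution of `f` with itself by `(2 ^ p * ∑ k, f k) • f` when `p > 1`,
and each further convolution with `f` costs the same factor. The theorem is the case `p = 2`.
-/

open Finset Finset.Nat

section AntidiagonalTuple

theorem sum_antidiagonalTuple_succ {M : Type*} [AddCommMonoid M] {r : ℕ}
    (g : (Fin (r + 1) → ℕ) → M) (n : ℕ) :
    ∑ k ∈ antidiagonalTuple (r + 1) n, g k =
      ∑ q ∈ antidiagonal n, ∑ k ∈ antidiagonalTuple r q.2, g (Fin.cons q.1 k) := by
  rw [sum_sigma']
  refine sum_nbij' (fun k ↦ ⟨(k 0, ∑ i, Fin.tail k i), Fin.tail k⟩)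
    (fun x ↦ Fin.cons x.1.1 x.2) ?_ ?_ ?_ ?_ ?_
  · intro k hk
    simpa [mem_antidiagonalTuple, Fin.sum_univ_succ, Fin.tail] using hk
  · rintro ⟨⟨a, b⟩, k⟩ hk
    simp_all [mem_antidiagonalTuple, Fin.sum_univ_succ]
  · simp
  · rintro ⟨⟨a, b⟩, k⟩ hk
    simp_all [mem_antidiagonalTuple]
  · simp

theorem sum_antidiagonalTuple_prod_le_pow_mul {R : Type*} [CommSemiring R] [PartialOrder R]
    [IsOrderedRing R] {f : ℕ → R} {C : R} (hf : ∀ n, 0 ≤ f n) (hC : 0 ≤ C)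
    (hconv : ∀ n, ∑ q ∈ antidiagonal n, f q.1 * f q.2 ≤ C * f n) (r n : ℕ) :
    ∑ k ∈ antidiagonalTuple (r + 1) n, ∏ i, f (k i) ≤ C ^ r * f n := by
  induction r generalizing n with
  | zero => simp
  | succ r ih =>
    calc ∑ k ∈ antidiagonalTuple (r + 2) n, ∏ i, f (k i)
        = ∑ q ∈ antidiagonal n, f q.1 * ∑ k ∈ antidiagonalTuple (r + 1) q.2, ∏ i, f (k i) := by
          simp only [sum_antidiagonalTuple_succ _ n, Fin.prod_univ_succ (n := r + 1),
            Fin.cons_zero, Fin.cons_succ, mul_sum]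
      _ ≤ ∑ q ∈ antidiagonal n, f q.1 * (C ^ r * f q.2) := by
          gcongr with q
          exacts [hf _, ih _]
      _ = C ^ r * ∑ q ∈ antidiagonal n, f q.1 * f q.2 := by
          simp only [mul_sum, mul_left_comm]
      _ ≤ C ^ r * (C * f n) := by
          gcongr
          exact hconv n
      _ = C ^ (r + 1) * f n := by ring

end AntidiagonalTuple

theorem sum_antidiagonal_mul_le_tsum_mul {f : ℕ → ℝ} {K : ℝ} (hf : ∀ n, 0 ≤ f n)
    (hsum : Summable f) (hK : 0 ≤ K)
    (hmul : ∀ a b, f a * f b ≤ K * (f a + f b) * f (a + b)) (n : ℕ) :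
    ∑ q ∈ antidiagonal n, f q.1 * f q.2 ≤ 2 * K * (∑' k, f k) * f n := by
  have hfst : ∑ q ∈ antidiagonal n, f q.1 = ∑ k ∈ range (n + 1), f k :=
    sum_antidiagonal_eq_sum_range_succ_mk (fun q ↦ f q.1) n
  have hsnd : ∑ q ∈ antidiagonal n, f q.2 = ∑ k ∈ range (n + 1), f k :=
    (sum_antidiagonal_swap (f := fun q ↦ f q.1)).trans hfst
  calc ∑ q ∈ antidiagonal n, f q.1 * f q.2
      ≤ ∑ q ∈ antidiagonal n, K * (f q.1 + f q.2) * f n :=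
        sum_le_sum fun q hq ↦ mem_antidiagonal.mp hq ▸ hmul q.1 q.2
    _ = 2 * K * (∑ k ∈ range (n + 1), f k) * f n := by
        rw [← sum_mul, ← mul_sum, sum_add_distrib, hfst, hsnd]
        ring
    _ ≤ 2 * K * (∑' k, f k) * f n := by
        gcongr
        exacts [hf n, hsum.sum_le_tsum _ fun k _ ↦ hf k]

section OneDivRpow

variable {p : ℝ}

theorem one_div_rpow_mul_one_div_rpow_le (hp : 1 ≤ p) {a b : ℝ} (ha : 0 < a) (hb : 0 < b) :
    1 / a ^ p * (1 / b ^ p) ≤ 2 ^ (p - 1) * (1 / a ^ p + 1 / b ^ p) * (1 / (a + b) ^ p) := by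
  have hconvex : (a + b) ^ p ≤ 2 ^ (p - 1) * (a ^ p + b ^ p) := by
    lift a to NNReal using ha.le
    lift b to NNReal using hb.le
    exact_mod_cast NNReal.rpow_add_le_mul_rpow_add_rpow a b hp
  calc 1 / a ^ p * (1 / b ^ p)
      = (a + b) ^ p * (1 / a ^ p * (1 / b ^ p) * (1 / (a + b) ^ p)) := by field_simp
    _ ≤ 2 ^ (p - 1) * (a ^ p + b ^ p) * (1 / a ^ p * (1 / b ^ p) * (1 / (a + b) ^ p)) := by
        gcongr
    _ = 2 ^ (p - 1) * (1 / a ^ p + 1 / b ^ p) * (1 / (a + b) ^ p) := by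
        field_simp
        ring

theorem sum_antidiagonal_one_div_rpow_mul_le (hp : 1 < p) (n : ℕ) :
    ∑ q ∈ antidiagonal n, 1 / (q.1 : ℝ) ^ p * (1 / (q.2 : ℝ) ^ p) ≤
      2 ^ p * (∑' k : ℕ, 1 / ((k : ℝ) + 1) ^ p) * (1 / (n : ℝ) ^ p) := by
  have hp0 : p ≠ 0 := by positivity
  have hsum : Summable fun k : ℕ ↦ 1 / (k : ℝ) ^ p := Real.summable_one_div_nat_rpow.mpr hp
  have hshift : ∑' k : ℕ, 1 / (k : ℝ) ^ p = ∑' k : ℕ, 1 / ((k : ℝ) + 1) ^ p := by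
    rw [hsum.tsum_eq_zero_add]
    simp [Real.zero_rpow hp0]
  have htwo : 2 * (2 : ℝ) ^ (p - 1) = 2 ^ p := by
    rw [Real.rpow_sub_one two_ne_zero, mul_div_cancel₀ _ two_ne_zero]
  rw [← hshift, ← htwo]
  refine sum_antidiagonal_mul_le_tsum_mul (f := fun k : ℕ ↦ 1 / (k : ℝ) ^ p)
    (fun k ↦ by positivity) hsum (by positivity) (fun a b ↦ ?_) n
  -- Since `1 / 0 ^ p = 0`, the left-hand side vanishes as soon as `a = 0` or `b = 0`.
  rcases a.eq_zero_or_pos with rfl | ha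
  · simp only [Nat.cast_zero, Real.zero_rpow hp0, div_zero, zero_mul, zero_add]
    positivity
  rcases b.eq_zero_or_pos with rfl | hb
  · simp only [Nat.cast_zero, Real.zero_rpow hp0, div_zero, mul_zero, add_zero]
    positivity
  rw [Nat.cast_add]
  exact one_div_rpow_mul_one_div_rpow_le hp.le (by positivity) (by positivity)

theorem stmt_0_general (hp : 1 < p) (r n : ℕ) :
    (n : ℝ) ^ p *
        ∑ k ∈ (antidiagonalTuple (r + 1) n).filter (fun k ↦ ∀ i, 1 ≤ k i),
          ∏ i, (1 / (k i : ℝ) ^ p) ≤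
      (2 ^ p * ∑' k : ℕ, 1 / ((k : ℝ) + 1) ^ p) ^ r := by
  have hC : 0 ≤ 2 ^ p * ∑' k : ℕ, 1 / ((k : ℝ) + 1) ^ p :=
    mul_nonneg (by positivity) (tsum_nonneg fun k ↦ by positivity)
  calc _ ≤ (n : ℝ) ^ p * ∑ k ∈ antidiagonalTuple (r + 1) n, ∏ i, (1 / (k i : ℝ) ^ p) := by
        gcongr
        exact filter_subset _ _
    _ ≤ (n : ℝ) ^ p * ((2 ^ p * ∑' k : ℕ, 1 / ((k : ℝ) + 1) ^ p) ^ r * (1 / (n : ℝ) ^ p)) := by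
        gcongr
        exact sum_antidiagonalTuple_prod_le_pow_mul (f := fun k : ℕ ↦ 1 / (k : ℝ) ^ p)
          (fun k ↦ by positivity) hC (sum_antidiagonal_one_div_rpow_mul_le hp) r n
    _ = (2 ^ p * ∑' k : ℕ, 1 / ((k : ℝ) + 1) ^ p) ^ r * ((n : ℝ) ^ p / (n : ℝ) ^ p) := by ring
    _ ≤ (2 ^ p * ∑' k : ℕ, 1 / ((k : ℝ) + 1) ^ p) ^ r :=
        mul_le_of_le_one_right (by positivity) (div_self_le_one _)

end OneDivRpow

/-- With `S = Σ_{k≥1} 1/k²`, for every `r ≥ 1` and `n ≥ 1`,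
`n² · Σ_{k₁+⋯+k_r=n, kᵢ≥1} 1/(k₁²⋯k_r²) ≤ (4S)^{r−1}`. -/
theorem stmt_0 (S : ℝ) (hS : S = ∑' k : ℕ, 1 / ((k : ℝ) + 1) ^ 2)
    (r n : ℕ) (hr : 1 ≤ r) (hn : 1 ≤ n) :
    (n : ℝ) ^ 2 *
        ∑ k ∈ (Finset.Nat.antidiagonalTuple r n).filter (fun k => ∀ i, 1 ≤ k i),
          ∏ i, (1 / ((k i : ℝ)) ^ 2) ≤
      (4 * S) ^ (r - 1) := by
  obtain ⟨r, rfl⟩ := Nat.exists_eq_add_of_le' hr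
  have hfour : (2 : ℝ) ^ (2 : ℝ) = 4 := by norm_num
  simpa only [hS, hfour, Real.rpow_two, Nat.add_sub_cancel] using
    stmt_0_general one_lt_two r n
end

section
/- For every real s > 1/2 and σ ≥ 0 there exists a constant C_{s,σ} > 0 such that for every integer N ≥ 1 and every integer k one has Σ_{l=0}^{N−1} ( ⟦k⟧^{s} e^{σ d_N(k)} / ( ⟦l⟧^{s} ⟦k−l⟧^{s} e^{σ d_N(l)} e^{σ d_N(k−l)} ) )² ≤ C_{s,σ}², where d_N(m) denotes the distance from the integer m to Nℤ and ⟦m⟧ := max(1, d_N(m)). -/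
open scoped BigOperators

/-- `d_N(k)`: the distance from the integer `k` to `Nℤ`. -/
noncomputable def dN (N : ℕ) (k : ℤ) : ℝ :=
  min ((k % (N : ℤ) : ℤ) : ℝ) ((N : ℝ) - ((k % (N : ℤ) : ℤ) : ℝ))

/-!
Since `d_N` is subadditive, the exponentials only help, and with `x = ⟦l⟧`, `y = ⟦k - l⟧` we have
`⟦k⟧ / (x y) ≤ (x + y) / (x y) = x⁻¹ + y⁻¹`. Convexity of `t ↦ t ^ (2s)` bounds the summand by
`2 ^ (2s - 1) (⟦l⟧ ^ (-2s) + ⟦k - l⟧ ^ (-2s))`. On `ℤ/Nℤ` the substitution `l ↦ k - l` is a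
bijection, and the representatives of smallest absolute value embed `ℤ/Nℤ` into `ℤ`, so the sum is
at most `2 ^ (2s) ∑_{m ∈ ℤ} max(1, |m|) ^ (-2s)`, which does not depend on `N` or `k`.
-/

section Weight

/-- The Fourier weight `⟦x⟧ ^ s * exp (σ x)` of the Sobolev-analytic norms, as a function of the
real variable `x`, which is to be replaced by the distance `d_N(k)` of a frequency `k` to `Nℤ`. -/
noncomputable def sobolevAnalyticWeight (s σ x : ℝ) : ℝ :=
  max 1 x ^ s * Real.exp (σ * x)

theorem add_rpow_le_two_rpow_mul_add_rpow {x y p : ℝ} (hx : 0 ≤ x) (hy : 0 ≤ y) (hp : 1 ≤ p) :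
    (x + y) ^ p ≤ 2 ^ (p - 1) * (x ^ p + y ^ p) := by
  lift x to NNReal using hx
  lift y to NNReal using hy
  exact_mod_cast NNReal.rpow_add_le_mul_rpow_add_rpow x y hp

theorem div_mul_rpow_le_of_le_add {x y z p : ℝ} (hx : 0 < x) (hy : 0 < y) (hz : 0 ≤ z)
    (hzxy : z ≤ x + y) (hp : 1 ≤ p) :
    (z / (x * y)) ^ p ≤ 2 ^ (p - 1) * (x ^ (-p) + y ^ (-p)) := by
  have hquot : z / (x * y) ≤ x⁻¹ + y⁻¹ := by
    rw [inv_add_inv hx.ne' hy.ne']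
    gcongr
  calc
    (z / (x * y)) ^ p ≤ (x⁻¹ + y⁻¹) ^ p := by gcongr
    _ ≤ 2 ^ (p - 1) * (x⁻¹ ^ p + y⁻¹ ^ p) :=
      add_rpow_le_two_rpow_mul_add_rpow (by positivity) (by positivity) hp
    _ = 2 ^ (p - 1) * (x ^ (-p) + y ^ (-p)) := by
      rw [Real.rpow_neg_eq_inv_rpow, Real.rpow_neg_eq_inv_rpow]

theorem max_one_le_add_of_le_add {a b c : ℝ} (hc : c ≤ a + b) :
    max 1 c ≤ max 1 a + max 1 b :=
  max_le (by linarith [le_max_left 1 a, le_max_left 1 b])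
    (hc.trans (add_le_add (le_max_right 1 a) (le_max_right 1 b)))

theorem sobolevAnalyticWeight_div_mul_le {s σ a b c : ℝ} (hσ : 0 ≤ σ) (hc : c ≤ a + b) :
    sobolevAnalyticWeight s σ c / (sobolevAnalyticWeight s σ a * sobolevAnalyticWeight s σ b) ≤
      (max 1 c / (max 1 a * max 1 b)) ^ s := by
  have hexp : Real.exp (σ * c) ≤ Real.exp (σ * a) * Real.exp (σ * b) := by
    rw [← Real.exp_add, ← mul_add]
    gcongr
  unfold sobolevAnalyticWeight
  rw [Real.div_rpow (by positivity) (by positivity), Real.mul_rpow (by positivity) (by positivity),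
    mul_mul_mul_comm, mul_div_mul_comm]
  exact mul_le_of_le_one_right (by positivity) (div_le_one_of_le₀ hexp (by positivity))

theorem sobolevAnalyticWeight_div_mul_sq_le {s σ a b c : ℝ} (hs : 1 / 2 ≤ s) (hσ : 0 ≤ σ)
    (hc : c ≤ a + b) :
    (sobolevAnalyticWeight s σ c /
        (sobolevAnalyticWeight s σ a * sobolevAnalyticWeight s σ b)) ^ 2 ≤
      2 ^ (2 * s - 1) * (max 1 a ^ (-(2 * s)) + max 1 b ^ (-(2 * s))) := by
  have hnonneg : 0 ≤ sobolevAnalyticWeight s σ c /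
      (sobolevAnalyticWeight s σ a * sobolevAnalyticWeight s σ b) := by
    unfold sobolevAnalyticWeight
    positivity
  calc
    _ ≤ ((max 1 c / (max 1 a * max 1 b)) ^ s) ^ 2 := by
      gcongr
      exact sobolevAnalyticWeight_div_mul_le hσ hc
    _ = (max 1 c / (max 1 a * max 1 b)) ^ (2 * s) := by
      rw [mul_comm 2 s, Real.rpow_mul (by positivity), Real.rpow_two]
    _ ≤ _ := div_mul_rpow_le_of_le_add (by positivity) (by positivity) (by positivity)
      (max_one_le_add_of_le_add hc) (by linarith)

theorem sum_sobolevAnalyticWeight_div_mul_sq_le {G : Type*} [AddGroup G] [Fintype G] {d : G → ℝ}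
    (hd : ∀ x y, d (x + y) ≤ d x + d y) {s σ : ℝ} (hs : 1 / 2 ≤ s) (hσ : 0 ≤ σ) (k : G) :
    ∑ x, (sobolevAnalyticWeight s σ (d k) /
        (sobolevAnalyticWeight s σ (d x) * sobolevAnalyticWeight s σ (d (k - x)))) ^ 2 ≤
      2 ^ (2 * s) * ∑ x, max 1 (d x) ^ (-(2 * s)) := by
  have hsplit (x : G) : d k ≤ d x + d (k - x) := by
    simpa only [sub_add_cancel, add_comm] using hd (k - x) x
  have hreflect : ∑ x, max 1 (d (k - x)) ^ (-(2 * s)) = ∑ x, max 1 (d x) ^ (-(2 * s)) :=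
    (Equiv.subLeft k).sum_comp fun x => max 1 (d x) ^ (-(2 * s))
  calc
    _ ≤ ∑ x, 2 ^ (2 * s - 1) * (max 1 (d x) ^ (-(2 * s)) + max 1 (d (k - x)) ^ (-(2 * s))) :=
      Finset.sum_le_sum fun x _ => sobolevAnalyticWeight_div_mul_sq_le hs hσ (hsplit x)
    _ = 2 ^ (2 * s) * ∑ x, max 1 (d x) ^ (-(2 * s)) := by
      rw [← Finset.mul_sum, Finset.sum_add_distrib, hreflect, Real.rpow_sub_one two_ne_zero]
      ring

end Weight

theorem summable_max_one_abs_int_rpow_neg {p : ℝ} (hp : 1 < p) :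
    Summable fun m : ℤ => max 1 |(m : ℝ)| ^ (-p) := by
  refine (Real.summable_abs_int_rpow hp).congr_cofinite ?_
  filter_upwards [(Set.finite_singleton 0).compl_mem_cofinite] with m hm
  rw [max_eq_right (mod_cast Int.one_le_abs hm)]

theorem abs_valMinAbs_add_le {n : ℕ} (x y : ZMod n) :
    |((x + y).valMinAbs : ℝ)| ≤ |(x.valMinAbs : ℝ)| + |(y.valMinAbs : ℝ)| := by
  have hnat : (x + y).valMinAbs.natAbs ≤ x.valMinAbs.natAbs + y.valMinAbs.natAbs :=
    (ZMod.natAbs_valMinAbs_add_le x y).trans (Int.natAbs_add_le _ _)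
  simpa only [Nat.cast_add, Nat.cast_natAbs, Int.cast_abs] using
    Nat.cast_le (α := ℝ).2 hnat

section Residues

variable (N : ℕ) [NeZero N]

theorem sum_range_natCast_zmod {M : Type*} [AddCommMonoid M] (f : ZMod N → M) :
    ∑ l ∈ Finset.range N, f l = ∑ x, f x :=
  Finset.sum_bij' (fun l _ => l) (fun x _ => x.val) (fun _ _ => Finset.mem_univ _)
    (fun x _ => Finset.mem_range.2 x.val_lt)
    (fun _ hl => ZMod.val_natCast_of_lt (Finset.mem_range.1 hl))
    (fun x _ => ZMod.natCast_zmod_val x) fun _ _ => rfl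

theorem sum_valMinAbs_le_tsum {f : ℤ → ℝ} (hf : Summable f) (hf₀ : ∀ m, 0 ≤ f m) :
    ∑ x : ZMod N, f x.valMinAbs ≤ ∑' m, f m := by
  rw [← tsum_fintype (L := .unconditional _)]
  exact tsum_comp_le_tsum_of_inj hf hf₀ ZMod.injective_valMinAbs

theorem dN_eq_abs_valMinAbs (k : ℤ) : dN N k = |((k : ZMod N).valMinAbs : ℝ)| := by
  have hmin : |(k : ZMod N).valMinAbs| = min (k % (N : ℤ)) (N - k % (N : ℤ)) := by
    rw [Int.abs_eq_natAbs, ZMod.valMinAbs_natAbs_eq_min, Nat.cast_min,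
      Nat.cast_sub (ZMod.val_le _), ZMod.val_intCast]
  unfold dN
  exact_mod_cast hmin.symm

end Residues

/-- the key weight estimate: for `s > 1/2`, `σ ≥ 0` there is `C_{s,σ} > 0`
such that for every `N ≥ 1` and every integer `k`,
`Σ_{l=0}^{N−1} ( ⟦k⟧^s e^{σ d_N(k)} / (⟦l⟧^s ⟦k−l⟧^s e^{σ d_N(l)} e^{σ d_N(k−l)}) )² ≤ C²`,
where `⟦m⟧ = max(1, d_N(m))`. -/
theorem stmt_4 (s σ : ℝ) (hs : 1 / 2 < s) (hσ : 0 ≤ σ) :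
    ∃ C > 0, ∀ N : ℕ, 1 ≤ N → ∀ k : ℤ,
      ∑ l ∈ Finset.range N,
          (max 1 (dN N k) ^ s * Real.exp (σ * dN N k) /
              (max 1 (dN N (l : ℤ)) ^ s * max 1 (dN N (k - (l : ℤ))) ^ s *
                Real.exp (σ * dN N (l : ℤ)) * Real.exp (σ * dN N (k - (l : ℤ))))) ^ 2 ≤
        C ^ 2 := by
  set S : ℝ := ∑' m : ℤ, max 1 |(m : ℝ)| ^ (-(2 * s))
  have hsum : Summable fun m : ℤ => max 1 |(m : ℝ)| ^ (-(2 * s)) :=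
    summable_max_one_abs_int_rpow_neg (by linarith)
  have hS : 0 < S := hsum.tsum_pos (fun m => by positivity) 0 (by positivity)
  refine ⟨√(2 ^ (2 * s) * S), by positivity, fun N hN k => ?_⟩
  have : NeZero N := ⟨by omega⟩
  let d (x : ZMod N) : ℝ := |(x.valMinAbs : ℝ)|
  let w (x : ZMod N) : ℝ := sobolevAnalyticWeight s σ (d x)
  calc
    _ = ∑ x : ZMod N, (w k / (w x * w (k - x))) ^ 2 := by
      rw [← sum_range_natCast_zmod]
      simp only [w, d, sobolevAnalyticWeight, dN_eq_abs_valMinAbs, Int.cast_sub, Int.cast_natCast,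
        mul_assoc, mul_left_comm]
    _ ≤ 2 ^ (2 * s) * ∑ x : ZMod N, max 1 (d x) ^ (-(2 * s)) :=
      sum_sobolevAnalyticWeight_div_mul_sq_le abs_valMinAbs_add_le hs.le hσ _
    _ ≤ 2 ^ (2 * s) * S := by
      gcongr
      exact sum_valMinAbs_le_tsum N hsum fun m => by positivity
    _ = _ := (Real.sq_sqrt (by positivity)).symm
end

section
/- For every integer N ≥ 2 and all integers j, k with 0 ≤ j, k ≤ ⌊N/2⌋ one has |2cos(jπ/N) − 2cos(kπ/N)| ≥ 4|j² − k²|/N². In particular, if j ≠ k then |2cos(jπ/N) − 2cos(kπ/N)| ≥ 4/N². -/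
/-!
Both factors of `cos x - cos y = -2 sin ((x + y) / 2) sin ((x - y) / 2)` are bounded below by
Jordan's inequality `|sin t| ≥ (2 / π) |t|`, valid for `|t| ≤ π / 2`; the product of the two linear
bounds is a multiple of `|x ^ 2 - y ^ 2|`.
-/

theorem two_div_pi_sq_mul_abs_sq_sub_sq_le_abs_cos_sub_cos {x y : ℝ} (h : |x| + |y| ≤ Real.pi) :
    2 / Real.pi ^ 2 * |x ^ 2 - y ^ 2| ≤ |Real.cos x - Real.cos y| := by
  have jordan {t : ℝ} (ht : |t| ≤ Real.pi) : 2 / Real.pi * |t / 2| ≤ |Real.sin (t / 2)| :=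
    Real.mul_abs_le_abs_sin (by rw [abs_div, abs_two]; gcongr)
  calc 2 / Real.pi ^ 2 * |x ^ 2 - y ^ 2|
      = 2 * (2 / Real.pi * |(x + y) / 2|) * (2 / Real.pi * |(x - y) / 2|) := by
        rw [sq_sub_sq, abs_mul, abs_div, abs_div, abs_two]
        ring
    _ ≤ 2 * |Real.sin ((x + y) / 2)| * |Real.sin ((x - y) / 2)| := by
        gcongr
        · exact jordan ((abs_add_le x y).trans h)
        · exact jordan ((abs_sub x y).trans h)
    _ = |Real.cos x - Real.cos y| := by
        rw [Real.cos_sub_cos, abs_mul, abs_mul, abs_neg, abs_two]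

theorem four_mul_abs_sq_sub_sq_div_sq_le_abs_two_mul_cos_sub_two_mul_cos {n s t : ℝ} (hn : 0 < n)
    (h : |s| + |t| ≤ n) :
    4 * |s ^ 2 - t ^ 2| / n ^ 2 ≤
      |2 * Real.cos (s * Real.pi / n) - 2 * Real.cos (t * Real.pi / n)| := by
  have angles_le : |s * Real.pi / n| + |t * Real.pi / n| ≤ Real.pi := by
    simp only [abs_div, abs_mul, abs_of_pos Real.pi_pos, abs_of_pos hn]
    rw [← add_div, ← add_mul, div_le_iff₀ hn, mul_comm Real.pi]
    gcongr
  calc 4 * |s ^ 2 - t ^ 2| / n ^ 2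
      = 2 * (2 / Real.pi ^ 2 * |(s * Real.pi / n) ^ 2 - (t * Real.pi / n) ^ 2|) := by
        have factor : (s * Real.pi / n) ^ 2 - (t * Real.pi / n) ^ 2 =
            (s ^ 2 - t ^ 2) * (Real.pi / n) ^ 2 := by ring
        rw [factor, abs_mul, abs_sq]
        field_simp
        ring
    _ ≤ 2 * |Real.cos (s * Real.pi / n) - Real.cos (t * Real.pi / n)| := by
        gcongr
        exact two_div_pi_sq_mul_abs_sq_sub_sq_le_abs_cos_sub_cos angles_le
    _ = |2 * Real.cos (s * Real.pi / n) - 2 * Real.cos (t * Real.pi / n)| := by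
        rw [← mul_sub, abs_mul, abs_two]

theorem one_le_abs_natCast_sq_sub_sq {R : Type*} [Ring R] [LinearOrder R] [IsStrictOrderedRing R]
    {j k : ℕ} (hjk : j ≠ k) : 1 ≤ |(j : R) ^ 2 - (k : R) ^ 2| := by
  have sq_sub_sq_ne_zero : (j : ℤ) ^ 2 - (k : ℤ) ^ 2 ≠ 0 :=
    sub_ne_zero.2 (mod_cast (Nat.pow_left_injective two_ne_zero).ne hjk)
  exact_mod_cast Int.one_le_abs sq_sub_sq_ne_zero

theorem stmt_6_general {N j k : ℕ} (hN : 0 < N) (hjk : j + k ≤ N) :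
    4 * |(j : ℝ) ^ 2 - (k : ℝ) ^ 2| / (N : ℝ) ^ 2 ≤
        |2 * Real.cos ((j : ℝ) * Real.pi / N) - 2 * Real.cos ((k : ℝ) * Real.pi / N)| ∧
      (j ≠ k →
        4 / (N : ℝ) ^ 2 ≤
          |2 * Real.cos ((j : ℝ) * Real.pi / N) - 2 * Real.cos ((k : ℝ) * Real.pi / N)|) := by
  have separation := four_mul_abs_sq_sub_sq_div_sq_le_abs_two_mul_cos_sub_two_mul_cos
    (n := N) (s := j) (t := k) (mod_cast hN) (by simpa only [Nat.abs_cast] using mod_cast hjk)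
  refine ⟨separation, fun hne => le_trans ?_ separation⟩
  gcongr
  exact le_mul_of_one_le_right zero_le_four (one_le_abs_natCast_sq_sub_sq hne)

/-- eigenvalue separation at one edge of the spectrum of the free Jacobi
matrix: for `N ≥ 2` and `0 ≤ j, k ≤ ⌊N/2⌋`,
`|2cos(jπ/N) − 2cos(kπ/N)| ≥ 4|j² − k²|/N²`; in particular if `j ≠ k` the left-hand side
is at least `4/N²`. -/
theorem stmt_6 (N : ℕ) (hN : 2 ≤ N) (j k : ℕ) (hj : j ≤ N / 2) (hk : k ≤ N / 2) :
    4 * |(j : ℝ) ^ 2 - (k : ℝ) ^ 2| / (N : ℝ) ^ 2 ≤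
        |2 * Real.cos ((j : ℝ) * Real.pi / N) - 2 * Real.cos ((k : ℝ) * Real.pi / N)| ∧
      (j ≠ k →
        4 / (N : ℝ) ^ 2 ≤
          |2 * Real.cos ((j : ℝ) * Real.pi / N) - 2 * Real.cos ((k : ℝ) * Real.pi / N)|) :=
  stmt_6_general (by lia) (by lia)
end

section
/- Let N ≥ 2, let b, a ∈ ℂ^N, and let 1 ≤ j ≤ N−1. Let g_j ∈ ℂ^{2N} have components g_j(m) = (2N)^{-1/2} e^{iπ(1+j/N)m}, 0 ≤ m ≤ 2N−1. Then the bilinear pairing of L_p(b,a) g_j with g_j satisfies Σ_{m=0}^{2N−1} (L_p(b,a) g_j)(m) · g_j(m) = N^{-1/2} ( b̂_j − 2 e^{iπj/N} â_j ). -/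
open scoped BigOperators

/-- Discrete Fourier transform of `u ∈ ℂ^N`, extended `N`-periodically in `k ∈ ℤ`. -/
noncomputable def dft (N : ℕ) (u : ℕ → ℂ) (k : ℤ) : ℂ :=
  (1 / (Real.sqrt N : ℂ)) * ∑ j ∈ Finset.range N,
    u j * Complex.exp (2 * Real.pi * Complex.I * j * k / N)

/-- The perturbation `L_p(b,a)` of the doubled Jacobi matrix. -/
noncomputable def LpM (N : ℕ) (b a : ℕ → ℂ) : Matrix (Fin (2 * N)) (Fin (2 * N)) ℂ :=
  Matrix.of fun m n =>
    if (m : ℕ) = (n : ℕ) then b ((m : ℕ) % N)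
    else if ((m : ℕ) + 1) % (2 * N) = (n : ℕ) then a ((m : ℕ) % N)
    else if ((n : ℕ) + 1) % (2 * N) = (m : ℕ) then a ((n : ℕ) % N)
    else 0

/-- The vectors `g_j ∈ ℂ^{2N}`, `g_j(m) = (2N)^{-1/2} e^{iπ(1+j/N)m}`. -/
noncomputable def g (N : ℕ) (j : ℤ) : Fin (2 * N) → ℂ := fun m =>
  (1 / (Real.sqrt (2 * N) : ℂ)) *
    Complex.exp (Real.pi * Complex.I * (1 + (j : ℂ) / N) * (m : ℕ))

/-!
The vector `g_j` is a geometric progression whose ratio `ζ = -e^{iπj/N}` satisfies `ζ^{2N} = 1`,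
so the cyclic shift acts on it as multiplication by `ζ`. As `L_p(b,a)` is a diagonal matrix plus
a weighted cyclic shift plus the transpose of that shift, and the last two have the same
quadratic form, the pairing is proportional to `∑ (b_m + 2 ζ a_m) ζ^{2m}` over `0 ≤ m < 2N`.
The summand is `N`-periodic in `m`, and `ζ² = e^{2πij/N}` turns the sum over one period into
discrete Fourier transforms.
-/

open scoped Matrix

section FinRotate

variable {n : ℕ}

lemma val_finRotate (i : Fin n) : (finRotate n i : ℕ) = (i + 1) % n := by
  have := i.neZero
  rw [finRotate_apply, Fin.val_add, Fin.val_one', Nat.add_mod_mod]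

lemma finRotate_ne_self (hn : 2 ≤ n) (i : Fin n) : finRotate n i ≠ i :=
  Equiv.Perm.mem_support.mp (by simp [support_finRotate_of_le hn])

lemma finRotate_finRotate_ne_self (hn : 3 ≤ n) (i : Fin n) :
    finRotate n (finRotate n i) ≠ i := by
  have := i.neZero
  rw [finRotate_apply, finRotate_apply, add_assoc, Ne, add_eq_left, Fin.ext_iff, Fin.val_add,
    Fin.val_one', Fin.val_zero, ← Nat.add_mod, Nat.mod_eq_of_lt hn]
  exact two_ne_zero

end FinRotate

lemma sum_range_mul_of_periodic {M : Type*} [AddCommMonoid M] {f : ℕ → M} {n : ℕ}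
    (hf : Function.Periodic f n) (k : ℕ) :
    ∑ m ∈ Finset.range (k * n), f m = k • ∑ m ∈ Finset.range n, f m := by
  induction k with
  | zero => simp
  | succ k ih =>
    have hshift (m : ℕ) : f (k * n + m) = f m := by
      rw [add_comm]
      exact hf.nat_mul k m
    rw [add_mul, one_mul, Finset.sum_range_add, ih, succ_nsmul]
    simp only [hshift]

lemma add_transpose_mulVec_dotProduct_self {ι R : Type*} [Fintype ι] [CommSemiring R]
    (A : Matrix ι ι R) (x : ι → R) : (A + Aᵀ) *ᵥ x ⬝ᵥ x = 2 * (A *ᵥ x ⬝ᵥ x) := by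
  rw [Matrix.add_mulVec, add_dotProduct, Matrix.mulVec_transpose, ← Matrix.dotProduct_mulVec,
    dotProduct_comm x, two_mul]

section WeightedCyclicShift

variable {n : ℕ} {R : Type*} [CommRing R]

/-- The weighted cyclic shift `(x_m) ↦ (w_m x_{m+1})` on `R^n`, indices mod `n`. With weights
`a_{m mod N}` it is the part of `LpM N b a` in the positions `(m, m + 1)`. -/
def weightedCyclicShift (w : Fin n → R) : Matrix (Fin n) (Fin n) R :=
  Matrix.diagonal w * (finRotate n).permMatrix R

lemma weightedCyclicShift_apply (w : Fin n → R) (i k : Fin n) :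
    weightedCyclicShift w i k = if finRotate n i = k then w i else 0 := by
  simp only [weightedCyclicShift, Matrix.diagonal_mul, Equiv.Perm.permMatrix,
    PEquiv.toMatrix_apply, Equiv.toPEquiv_apply, Option.mem_some_iff, mul_ite, mul_one, mul_zero]

lemma weightedCyclicShift_mulVec (w x : Fin n → R) (i : Fin n) :
    (weightedCyclicShift w *ᵥ x) i = w i * x (finRotate n i) := by
  rw [weightedCyclicShift, ← Matrix.mulVec_mulVec, Matrix.mulVec_diagonal,
    Matrix.permMatrix_mulVec, Function.comp_apply]

end WeightedCyclicShift

section PeriodicJacobi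

variable {N : ℕ} (b a : ℕ → ℂ)

lemma LpM_eq_diagonal_add_weightedCyclicShift_add_transpose (hN : 2 ≤ N) :
    LpM N b a = Matrix.diagonal (fun m : Fin (2 * N) => b (m % N)) +
      (weightedCyclicShift (fun m : Fin (2 * N) => a (m % N)) +
        (weightedCyclicShift fun m : Fin (2 * N) => a (m % N))ᵀ) := by
  ext m n
  -- The three index patterns of `LpM` are disjoint, so its nested conditional is a sum.
  have hstep : finRotate (2 * N) m = n → m ≠ n := by
    rintro rfl
    exact (finRotate_ne_self (by lia) m).symm
  have hback : finRotate (2 * N) n = m → m ≠ n ∧ finRotate (2 * N) m ≠ n := by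
    rintro rfl
    exact ⟨finRotate_ne_self (by lia) n, finRotate_finRotate_ne_self (by lia) n⟩
  simp only [LpM, Matrix.of_apply, Matrix.add_apply, Matrix.transpose_apply,
    Matrix.diagonal_apply, weightedCyclicShift_apply, ← val_finRotate, ← Fin.ext_iff]
  grind

lemma LpM_mulVec_dotProduct_self (hN : 2 ≤ N) (x : Fin (2 * N) → ℂ) :
    LpM N b a *ᵥ x ⬝ᵥ x =
      ∑ m : Fin (2 * N), (b (m % N) * x m + 2 * a (m % N) * x (finRotate (2 * N) m)) * x m := by
  rw [LpM_eq_diagonal_add_weightedCyclicShift_add_transpose b a hN, Matrix.add_mulVec,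
    add_dotProduct, add_transpose_mulVec_dotProduct_self]
  simp only [dotProduct, Matrix.mulVec_diagonal, weightedCyclicShift_mulVec, Finset.mul_sum,
    ← Finset.sum_add_distrib]
  exact Finset.sum_congr rfl fun m _ => by ring

lemma LpM_mulVec_pow_dotProduct_pow (hN : 2 ≤ N) {ζ : ℂ} (hζ : ζ ^ (2 * N) = 1) :
    (LpM N b a *ᵥ fun m => ζ ^ (m : ℕ)) ⬝ᵥ (fun m => ζ ^ (m : ℕ)) =
      2 * (∑ m ∈ Finset.range N, b m * (ζ ^ 2) ^ m +
        2 * ζ * ∑ m ∈ Finset.range N, a m * (ζ ^ 2) ^ m) := by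
  let F (m : ℕ) : ℂ := (b (m % N) + 2 * ζ * a (m % N)) * (ζ ^ 2) ^ m
  have hF : Function.Periodic F N := fun m => by
    simp only [F, Nat.add_mod_right, pow_add, ← pow_mul ζ 2 N, hζ, mul_one]
  have hrotate (m : Fin (2 * N)) : ζ ^ (finRotate (2 * N) m : ℕ) = ζ * ζ ^ (m : ℕ) := by
    rw [val_finRotate, ← pow_eq_pow_mod _ hζ, pow_succ']
  calc _ = ∑ m : Fin (2 * N), F m := by
        rw [LpM_mulVec_dotProduct_self b a hN]
        refine Finset.sum_congr rfl fun m _ => ?_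
        rw [hrotate]
        ring
    _ = 2 * ∑ m ∈ Finset.range N, F m := by
        rw [Fin.sum_univ_eq_sum_range F, sum_range_mul_of_periodic hF, nsmul_eq_mul, Nat.cast_ofNat]
    _ = _ := by
        rw [Finset.mul_sum (a := 2 * ζ), ← Finset.sum_add_distrib]
        refine congrArg _ (Finset.sum_congr rfl fun m hm => ?_)
        simp only [F, Nat.mod_eq_of_lt (Finset.mem_range.mp hm)]
        ring

end PeriodicJacobi

/-- The common ratio `e^{iπ(1+j/N)} = -e^{iπj/N}` of the geometric progression `g N j`. -/
noncomputable def gRatio (N : ℕ) (j : ℤ) : ℂ :=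
  -Complex.exp (Real.pi * Complex.I * j / N)

section GRatio

variable (N : ℕ) (j : ℤ)

lemma gRatio_sq_pow (m : ℕ) :
    (gRatio N j ^ 2) ^ m = Complex.exp (2 * Real.pi * Complex.I * m * j / N) := by
  rw [gRatio, neg_sq, ← pow_mul, ← Complex.exp_nat_mul]
  push_cast
  ring_nf

lemma gRatio_pow_two_mul {N : ℕ} (hN : N ≠ 0) : gRatio N j ^ (2 * N) = 1 := by
  rw [pow_mul, gRatio_sq_pow, Complex.exp_eq_one_iff]
  exact ⟨j, by field_simp⟩

lemma g_eq_smul_gRatio_pow :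
    g N j = (1 / (Real.sqrt (2 * N) : ℂ)) • fun m : Fin (2 * N) => gRatio N j ^ (m : ℕ) := by
  have hratio : Complex.exp (Real.pi * Complex.I * (1 + (j : ℂ) / N)) = gRatio N j := by
    rw [mul_add, mul_one, Complex.exp_add, Complex.exp_pi_mul_I, neg_one_mul, ← mul_div_assoc,
      gRatio]
  ext m
  rw [g, mul_comm _ ((m : ℕ) : ℂ), Complex.exp_nat_mul, hratio, Pi.smul_apply, smul_eq_mul]

lemma dft_eq_sum_gRatio (u : ℕ → ℂ) :
    dft N u j =
      (1 / (Real.sqrt N : ℂ)) * ∑ m ∈ Finset.range N, u m * (gRatio N j ^ 2) ^ m := by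
  simp only [dft, gRatio_sq_pow]

end GRatio

lemma one_div_sqrt_sq {x : ℝ} (hx : 0 ≤ x) : (1 / (Real.sqrt x : ℂ)) ^ 2 = 1 / x := by
  rw [div_pow, one_pow, ← Complex.ofReal_pow, Real.sq_sqrt hx]

theorem stmt_10_general (N : ℕ) (hN : 2 ≤ N) (b a : ℕ → ℂ) (j : ℤ) :
    ∑ m : Fin (2 * N), ((LpM N b a).mulVec (g N j)) m * g N j m =
      (1 / (Real.sqrt N : ℂ)) *
        (dft N b j - 2 * Complex.exp (Real.pi * Complex.I * j / N) * dft N a j) := by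
  have hexp : Complex.exp (Real.pi * Complex.I * j / N) = -gRatio N j := (neg_neg _).symm
  have hnorm : (1 / (Real.sqrt (2 * N) : ℂ)) ^ 2 * 2 = (1 / (Real.sqrt N : ℂ)) ^ 2 := by
    rw [one_div_sqrt_sq (by positivity), one_div_sqrt_sq (by positivity)]
    push_cast
    field_simp
  change LpM N b a *ᵥ g N j ⬝ᵥ g N j = _
  rw [g_eq_smul_gRatio_pow, Matrix.mulVec_smul, smul_dotProduct, dotProduct_smul,
    LpM_mulVec_pow_dotProduct_pow b a hN (gRatio_pow_two_mul j (by lia)), smul_eq_mul,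
    smul_eq_mul, ← mul_assoc, ← mul_assoc, ← sq, hnorm, dft_eq_sum_gRatio, dft_eq_sum_gRatio, hexp]
  ring

/-- the bilinear pairing of `L_p(b,a) g_j` with `g_j` equals
`N^{-1/2}(b̂_j − 2 e^{iπj/N} â_j)`, for `1 ≤ j ≤ N−1`. -/
theorem stmt_10 (N : ℕ) (hN : 2 ≤ N) (b a : ℕ → ℂ) (j : ℕ)
    (hj1 : 1 ≤ j) (hj2 : j ≤ N - 1) :
    ∑ m : Fin (2 * N), ((LpM N b a).mulVec (g N j)) m * g N j m =
      (1 / (Real.sqrt N : ℂ)) *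
        (dft N b j - 2 * Complex.exp (Real.pi * Complex.I * j / N) * dft N a j) := by
  simpa only [Int.cast_natCast] using stmt_10_general N hN b a j
end
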